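/- Let H ≥ 1 and let X^{(1)}, …, X^{(n)}, X^{(n+1)} be independent and identically distributed random vectors with values in ℝ^H on a probability space (Ω, P), and let A = (A_1, …, A_H) be a random vector with strictly positive entries that is independent of the family (X^{(1)}, …, X^{(n+1)}). Let δ ∈ (0,1) and set p := ⌈(n+1)(1−δ)⌉; assume p ≤ n. Define the random scores S^{(i)} := max_{1≤h≤H} A_h X^{(i)}_h and let Q be the p-th smallest value among S^{(1)}, …, S^{(n)}. Then P( for all h ∈ {1,…,H}: X^{(n+1)}_h ≤ Q/A_h ) ≥ 1 − δ. -/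

import Mathlib

open MeasureTheory ProbabilityTheory

/-- The `k`-th smallest value (k-th order statistic, 1-indexed) of a finite tuple of reals:
the `k`-th entry of the tuple sorted in non-decreasing order. -/
noncomputable def kthSmallest {m : ℕ} (r : Fin m → ℝ) (k : ℕ) : ℝ :=
  ((List.ofFn r).mergeSort (· ≤ ·)).getD (k - 1) 0

lemma kth_eq {m : ℕ} (r : Fin m → ℝ) (k : ℕ) (hk : 1 ≤ k) (hkm : k ≤ m) :
    kthSmallest r k = r (Tuple.sort r ⟨k - 1, by omega⟩) := by
  have hE : (List.ofFn r).mergeSort (· ≤ ·) = List.ofFn (r ∘ Tuple.sort r) := by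
    have h1 : ((List.ofFn r).mergeSort (· ≤ ·)).Pairwise (· ≤ ·) := by
      have := List.pairwise_mergeSort (le := fun a b : ℝ => decide (a ≤ b))
        (by intro a b c; simpa using le_trans) (by intro a b; simpa using le_total a b)
        (List.ofFn r)
      simpa using this
    have h2 : (List.ofFn (r ∘ Tuple.sort r)).Pairwise (· ≤ ·) := by
      rw [List.pairwise_ofFn]
      intro i j hij
      exact Tuple.monotone_sort r hij.le
    refine List.Perm.eq_of_pairwise (le := (· ≤ ·)) (fun a b _ _ => le_antisymm) h1 h2 ?_
    exact (List.mergeSort_perm _ _).trans (Equiv.Perm.ofFn_comp_perm (Tuple.sort r) r).symm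
  unfold kthSmallest
  rw [hE, List.getD_eq_getElem _ _ (by simp; omega)]
  simp

lemma kth_count {m : ℕ} (r : Fin m → ℝ) (k : ℕ) (hk : 1 ≤ k) (hkm : k ≤ m) :
    k ≤ (Finset.univ.filter (fun i => r i ≤ kthSmallest r k)).card := by
  rw [kth_eq r k hk hkm]
  let g : Fin k → Fin m := fun i => Tuple.sort r ⟨i, by omega⟩
  have hg : Function.Injective g := by
    intro a b h
    have := (Tuple.sort r).injective h
    ext; simpa using this
  calc k = (Finset.univ.image g).card := by
        rw [Finset.card_image_of_injective _ hg]; simp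
    _ ≤ _ := by
        apply Finset.card_le_card
        intro i hi
        obtain ⟨a, -, rfl⟩ := Finset.mem_image.1 hi
        simp only [Finset.mem_filter, Finset.mem_univ, true_and]
        apply Tuple.monotone_sort r
        simp only [Fin.mk_le_mk]; omega

lemma rank_count {m : ℕ} (f : Fin m → ℝ) (k : ℕ) (hkm : k ≤ m) :
    k ≤ (Finset.univ.filter
      (fun j => (Finset.univ.filter (fun i => f i < f j)).card < k)).card := by
  let g : Fin k → Fin m := fun i => Tuple.sort f ⟨i, by omega⟩
  have hg : Function.Injective g := by
    intro a b h
    have := (Tuple.sort f).injective h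
    ext; simpa using this
  calc k = (Finset.univ.image g).card := by
        rw [Finset.card_image_of_injective _ hg]; simp
    _ ≤ _ := by
        apply Finset.card_le_card
        intro i hi
        obtain ⟨a, -, rfl⟩ := Finset.mem_image.1 hi
        simp only [Finset.mem_filter, Finset.mem_univ, true_and]
        have hsub : (Finset.univ.filter (fun i => f i < f (g a))) ⊆
            (Finset.Iio (⟨a, by omega⟩ : Fin m)).image (Tuple.sort f) := by
          intro i hi
          simp only [Finset.mem_filter, Finset.mem_univ, true_and] at hi
          refine Finset.mem_image.2 ⟨(Tuple.sort f).symm i, ?_, by simp⟩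
          rw [Finset.mem_Iio]
          by_contra hc
          have := Tuple.monotone_sort f (not_lt.1 hc)
          simp only [Function.comp, Equiv.apply_symm_apply] at this
          exact absurd hi (not_lt.2 this)
        calc _ ≤ _ := Finset.card_le_card hsub
          _ ≤ _ := Finset.card_image_le
          _ < k := by simp

lemma joint_law {Ω E F : Type*} [MeasurableSpace Ω] [MeasurableSpace E] [MeasurableSpace F]
    (P : Measure Ω) [IsProbabilityMeasure P] (n : ℕ) (X : Fin (n + 1) → Ω → E)
    (hmeas : ∀ i, Measurable (X i)) (hindep : iIndepFun X P)
    (hident : ∀ i j, IdentDistrib (X i) (X j) P P)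
    (A : Ω → F) (hAmeas : Measurable A)
    (hAindep : IndepFun A (fun ω => fun i : Fin (n + 1) => X i ω) P)
    (σ : Equiv.Perm (Fin (n + 1))) :
    P.map (fun ω => (A ω, fun i => X (σ i) ω)) = P.map (fun ω => (A ω, fun i => X i ω)) := by
  have hX : Measurable (fun ω => fun i : Fin (n + 1) => X i ω) := measurable_pi_lambda _ hmeas
  have hXσ : Measurable (fun ω => fun i : Fin (n + 1) => X (σ i) ω) :=
    measurable_pi_lambda _ (fun i => hmeas _)
  have hi2 : IndepFun A (fun ω => fun i : Fin (n + 1) => X (σ i) ω) P :=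
    hAindep.comp (φ := id) (ψ := fun x : Fin (n + 1) → E => fun i => x (σ i)) measurable_id
      (measurable_pi_lambda _ (fun i => measurable_pi_apply _))
  rw [(indepFun_iff_map_prod_eq_prod_map_map hAmeas.aemeasurable hX.aemeasurable).1 hAindep,
    (indepFun_iff_map_prod_eq_prod_map_map hAmeas.aemeasurable hXσ.aemeasurable).1 hi2]
  congr 1
  rw [(iIndepFun_iff_map_fun_eq_pi_map (fun i => (hmeas i).aemeasurable)).1 hindep,
    (iIndepFun_iff_map_fun_eq_pi_map (f := fun i => X (σ i))
      (fun i => (hmeas _).aemeasurable)).1 (hindep.precomp σ.injective)]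
  congr 1
  funext i
  exact (hident _ _).map_eq

/-- Data-splitting step of Algorithm 1: the conformal coverage guarantee with
max-normalized scores is preserved when the normalization constants form a random vector
`A` with strictly positive entries that is independent of the i.i.d. family
`X 0, …, X n` of `ℝ^{H+1}`-valued random vectors. With `δ ∈ (0,1)`,
`p := ⌈(n+1)(1-δ)⌉ ≤ n`, random scores `S i := max_h A h * X i h`, and `Q` the `p`-th
smallest of the first `n` scores, the test vector satisfies `X_h ≤ Q / A h` for all `h`
with probability at least `1 - δ`. -/
theorem conformal_random_normalization {Ω : Type*} [MeasurableSpace Ω] (P : Measure Ω)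
    [IsProbabilityMeasure P]
    (H n : ℕ) (X : Fin (n + 1) → Ω → (Fin (H + 1) → ℝ))
    (hmeas : ∀ i, Measurable (X i))
    (hindep : iIndepFun X P)
    (hident : ∀ i j, IdentDistrib (X i) (X j) P P)
    (A : Ω → (Fin (H + 1) → ℝ)) (hAmeas : Measurable A)
    (hApos : ∀ ω h, 0 < A ω h)
    (hAindep : IndepFun A (fun ω => fun i : Fin (n + 1) => X i ω) P)
    (δ : ℝ) (hδ : δ ∈ Set.Ioo (0 : ℝ) 1)
    (p : ℕ) (hp : p = ⌈((n : ℝ) + 1) * (1 - δ)⌉₊) (hpn : p ≤ n)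
    (S : Fin (n + 1) → Ω → ℝ)
    (hS : ∀ i ω, S i ω = Finset.univ.sup' Finset.univ_nonempty (fun h => A ω h * X i ω h))
    (Q : Ω → ℝ)
    (hQ : ∀ ω, Q ω = kthSmallest (fun i : Fin n => S i.castSucc ω) p) :
    P {ω | ∀ h, X (Fin.last n) ω h ≤ Q ω / A ω h} ≥ ENNReal.ofReal (1 - δ) := by
  have hp1 : 1 ≤ p := by
    rw [hp, Nat.one_le_ceil_iff]
    have := hδ.2
    have : 0 < 1 - δ := by linarith
    positivity
  let s : (Fin (H + 1) → ℝ) → (Fin (H + 1) → ℝ) → ℝ := fun a x =>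
    Finset.univ.sup' Finset.univ_nonempty (fun h => a h * x h)
  have hs : Measurable (fun q : (Fin (H + 1) → ℝ) × (Fin (H + 1) → ℝ) => s q.1 q.2) := by
    have : (fun q : (Fin (H + 1) → ℝ) × (Fin (H + 1) → ℝ) => s q.1 q.2) =
        Finset.univ.sup' Finset.univ_nonempty
          (fun h => fun q : (Fin (H + 1) → ℝ) × (Fin (H + 1) → ℝ) => q.1 h * q.2 h) := by
      funext q
      simp only [s, Finset.sup'_apply]
    rw [this]
    refine Finset.measurable_sup' _ (fun h _ => ?_)
    fun_prop
  let T := (Fin (H + 1) → ℝ) × (Fin (n + 1) → Fin (H + 1) → ℝ)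
  let N : Fin (n + 1) → T → ℕ := fun j q =>
    (Finset.univ.filter (fun i => s q.1 (q.2 i) < s q.1 (q.2 j))).card
  have hsi : ∀ i, Measurable (fun q : T => s q.1 (q.2 i)) := fun i =>
    hs.comp (measurable_fst.prodMk ((measurable_pi_apply i).comp measurable_snd))
  have hN : ∀ j, Measurable (N j) := by
    intro j
    simp only [N, Finset.card_filter]
    refine Finset.measurable_sum _ (fun i _ => ?_)
    exact Measurable.ite (measurableSet_lt (hsi i) (hsi j)) measurable_const measurable_const
  let G : Fin (n + 1) → Set T := fun j => {q | N j q < p}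
  have hG : ∀ j, MeasurableSet (G j) := fun j => measurableSet_lt (hN j) measurable_const
  let Z : Ω → T := fun ω => (A ω, fun i => X i ω)
  have hZ : Measurable Z := hAmeas.prodMk (measurable_pi_lambda _ hmeas)
  have hEq : ∀ j, P (Z ⁻¹' G j) = P (Z ⁻¹' G (Fin.last n)) := by
    intro j
    let σ := Equiv.swap j (Fin.last n)
    have hl := joint_law P n X hmeas hindep hident A hAmeas hAindep σ
    have hZσ : Measurable (fun ω => ((A ω, fun i => X (σ i) ω) : T)) :=
      hAmeas.prodMk (measurable_pi_lambda _ (fun i => hmeas _))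
    have h2 : P ((fun ω => ((A ω, fun i => X (σ i) ω) : T)) ⁻¹' G (Fin.last n)) =
        P (Z ⁻¹' G (Fin.last n)) := by
      rw [← Measure.map_apply hZσ (hG _), ← Measure.map_apply hZ (hG _)]
      exact congrArg (fun μ => μ (G (Fin.last n))) hl
    rw [← h2]
    congr 1
    ext ω
    have hc : N j (Z ω) = N (Fin.last n) (A ω, fun i => X (σ i) ω) := by
      simp only [N, Z]
      refine Finset.card_equiv σ ?_
      intro i
      simp [σ]
    change N j (Z ω) < p ↔ N (Fin.last n) (A ω, fun i => X (σ i) ω) < p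
    rw [hc]
  have hsub : Z ⁻¹' G (Fin.last n) ⊆ {ω | ∀ h, X (Fin.last n) ω h ≤ Q ω / A ω h} := by
    intro ω hω h
    rw [le_div_iff₀ (hApos ω h)]
    have hSl : S (Fin.last n) ω ≤ Q ω := by
      by_contra hc
      push Not at hc
      have h1 := kth_count (fun i : Fin n => S i.castSucc ω) p hp1 hpn
      rw [← hQ] at h1
      have h2 : (Finset.univ.filter (fun i : Fin n => S i.castSucc ω ≤ Q ω)).card ≤
          N (Fin.last n) (Z ω) := by
        refine Finset.card_le_card_of_injOn Fin.castSucc ?_ (Fin.castSucc_injective n).injOn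
        intro i hi
        simp only [Finset.coe_filter, Finset.mem_univ, true_and, Set.mem_ofPred_eq] at hi ⊢
        have := lt_of_le_of_lt hi hc
        rw [hS, hS] at this
        exact this
      have h3 : N (Fin.last n) (Z ω) < p := hω
      omega
    refine le_trans ?_ hSl
    rw [hS, mul_comm]
    exact Finset.le_sup' (fun h => A ω h * X (Fin.last n) ω h) (Finset.mem_univ h)
  have hsum : (p : ENNReal) ≤ ∑ j, P (Z ⁻¹' G j) := by
    have hint : ∑ j, P (Z ⁻¹' G j) = ∫⁻ ω, ∑ j, (Z ⁻¹' G j).indicator 1 ω ∂P := by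
      rw [lintegral_finsetSum]
      · refine Finset.sum_congr rfl (fun j _ => ?_)
        rw [lintegral_indicator_one (hZ (hG j))]
      · intro j _
        exact measurable_one.indicator (hZ (hG j))
    rw [hint]
    calc (p : ENNReal) = ∫⁻ _, (p : ENNReal) ∂P := by simp
      _ ≤ _ := by
        refine lintegral_mono (fun ω => ?_)
        have h := rank_count (fun i => s (A ω) (X i ω)) p (by omega)
        rw [Finset.card_filter] at h
        have h' : (p : ENNReal) ≤ ((∑ j, if N j (Z ω) < p then 1 else 0 : ℕ) : ENNReal) :=
          Nat.cast_le.2 h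
        refine h'.trans (le_of_eq ?_)
        push_cast
        refine Finset.sum_congr rfl (fun j _ => ?_)
        simp only [Set.indicator, G, Set.mem_preimage, Set.mem_ofPred_eq, Pi.one_apply]
  refine le_trans ?_ (measure_mono hsub)
  simp only [hEq, Finset.sum_const, Finset.card_univ, Fintype.card_fin, nsmul_eq_mul] at hsum
  have hne : P (Z ⁻¹' G (Fin.last n)) ≠ ⊤ := measure_ne_top _ _
  rw [ENNReal.ofReal_le_iff_le_toReal hne]
  have h4 := ENNReal.toReal_mono (by finiteness) hsum
  rw [ENNReal.toReal_mul] at h4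
  simp only [ENNReal.toReal_natCast] at h4
  push_cast at h4
  have h5 : ((n : ℝ) + 1) * (1 - δ) ≤ p := by rw [hp]; exact Nat.le_ceil _
  have h6 : (0 : ℝ) < (n : ℝ) + 1 := by positivity
  exact le_of_mul_le_mul_left (h5.trans h4) h6
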